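/- Let t ∈ 𝒯_Σ with str(t) = x₁ x₂ ⋯ x_T, and let i be a position with 1 ≤ i ≤ T such that x_i ≠ ⟧ (i.e. i ∈ I_t). Then there exists exactly one index j with i ≤ j ≤ T such that the contiguous substring x_i x_{i+1} ⋯ x_j lies in the image of str, i.e. equals str(τ) for some tree τ ∈ 𝒯_Σ. -/

import Mathlib

/-!
The set of strings `str τ` is a prefix code (`BinTree.str_append_inj`): a string starting with
`str τ` determines both `τ` and the remainder, so at most one substring starting at a given
position encodes a tree. Existence (`BinTree.exists_drop_str`) is by induction on `t`: a position
that does not carry a closing bracket is either the first one, where `t` itself is read off, or it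
lies inside the representation of one of the two children.
-/

/-- Binary trees with leaves labeled in `S`. -/
inductive BinTree (S : Type*) : Type _
  | leaf : S → BinTree S
  | node : BinTree S → BinTree S → BinTree S

/-- String representation of a binary tree over the alphabet `S ⊕ Bool`,
where `Sum.inr false` is the opening bracket `⟦` and `Sum.inr true` is the
closing bracket `⟧`. -/
def BinTree.str {S : Type*} : BinTree S → List (S ⊕ Bool)
  | .leaf σ => [Sum.inl σ]
  | .node t₁ t₂ => Sum.inr false :: (t₁.str ++ t₂.str ++ [Sum.inr true])

theorem BinTree.str_length_pos {S : Type*} (t : BinTree S) : 0 < t.str.length := by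
  cases t <;> simp [BinTree.str]

/-- Unique readability: the strings `str s` form a prefix code, and `str` is injective. -/
theorem BinTree.str_append_inj {S : Type*} (s : BinTree S) :
    ∀ (s' : BinTree S) (a b : List (S ⊕ Bool)), s.str ++ a = s'.str ++ b → s = s' ∧ a = b := by
  induction s with
  | leaf σ =>
    intro s' a b h
    cases s' <;> simp_all [BinTree.str]
  | node t₁ t₂ ih₁ ih₂ =>
    intro s' a b h
    cases s' with
    | leaf σ => simp [BinTree.str] at h
    | node u₁ u₂ =>
      simp only [BinTree.str, List.cons_append, List.append_assoc, List.cons.injEq,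
        true_and] at h
      obtain ⟨rfl, h₁⟩ := ih₁ _ _ _ h
      obtain ⟨rfl, h₂⟩ := ih₂ _ _ _ h₁
      simpa using h₂

/-- From every position that is not a closing bracket, a tree can be read off. -/
theorem BinTree.exists_drop_str {S : Type*} (t : BinTree S) :
    ∀ (i : ℕ) (hi : i < t.str.length), t.str[i] ≠ Sum.inr true →
      ∃ (τ : BinTree S) (c : List (S ⊕ Bool)), t.str.drop i = τ.str ++ c := by
  induction t with
  | leaf σ =>
    intro i hi _
    obtain rfl : i = 0 := by simpa [BinTree.str] using hi
    exact ⟨.leaf σ, [], by simp⟩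
  | node t₁ t₂ ih₁ ih₂ =>
    intro i hi hne
    rcases i with _ | i
    · exact ⟨.node t₁ t₂, [], by simp⟩
    simp only [BinTree.str, List.length_cons, List.length_append, List.length_nil] at hi
    simp only [BinTree.str, List.getElem_cons_succ, List.append_assoc] at hne
    simp only [BinTree.str, List.drop_succ_cons, List.append_assoc]
    by_cases h₁ : i < t₁.str.length
    · rw [List.getElem_append_left h₁] at hne
      obtain ⟨τ, c, h⟩ := ih₁ i h₁ hne
      exact ⟨τ, c ++ (t₂.str ++ [Sum.inr true]), by
        rw [List.drop_append_of_le_length h₁.le, h, List.append_assoc]⟩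
    · obtain ⟨k, rfl⟩ := Nat.exists_eq_add_of_le (not_lt.mp h₁)
      rw [List.getElem_append_right (by omega)] at hne
      simp only [Nat.add_sub_cancel_left] at hne
      rw [List.drop_length_add_append]
      by_cases h₂ : k < t₂.str.length
      · rw [List.getElem_append_left h₂] at hne
        obtain ⟨τ, c, h⟩ := ih₂ k h₂ hne
        exact ⟨τ, c ++ [Sum.inr true], by
          rw [List.drop_append_of_le_length h₂.le, h, List.append_assoc]⟩
      · rw [List.getElem_append_right (by omega)] at hne
        simp at hne

/-- For any position `i` of `str t` (0-based) whose symbol is not a closing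
bracket, there is exactly one position `j ≥ i` such that the contiguous
substring of `str t` from position `i` to position `j` (inclusive) is the
string representation of some tree.  This makes the subtree map
`τ : I_t → 𝒯_Σ` well defined. -/
theorem BinTree.subtree_substring_exists_unique {S : Type*} (t : BinTree S)
    (i : ℕ) (hi : i < t.str.length) (hne : t.str.get ⟨i, hi⟩ ≠ Sum.inr true) :
    ∃! j : ℕ, i ≤ j ∧ j < t.str.length ∧
      ∃ τ : BinTree S, (t.str.drop i).take (j + 1 - i) = τ.str := by
  obtain ⟨τ, c, h⟩ := t.exists_drop_str i hi hne
  have hpos := τ.str_length_pos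
  have hlen := congrArg List.length h
  simp only [List.length_drop, List.length_append] at hlen
  refine ⟨i + τ.str.length - 1, ⟨by omega, by omega, τ, ?_⟩, ?_⟩
  · rw [h, show i + τ.str.length - 1 + 1 - i = τ.str.length by omega, List.take_left]
  · rintro j ⟨hij, hj, τ', h'⟩
    have hs := List.take_append_drop (j + 1 - i) (t.str.drop i)
    rw [h', h] at hs
    obtain ⟨rfl, -⟩ := BinTree.str_append_inj _ _ _ _ hs
    have hl := congrArg List.length h'
    simp only [List.length_take, List.length_drop] at hl
    omega
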